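/- arXiv:2512.14199 — 2 statements merged into one kernel-verified Lean document; each statement's English description precedes it below -/
import Mathlib

section
/- The normal fan of every parking function polytope coarsens the normal fan of PF((1,2,…,n)): for every extreme point v of PF(u) there exists a set S of extreme points of PF((1,2,…,n)) (the stellahedron) such that ncone(v, PF(u)) = ⋃_{w ∈ S} ncone(w, PF((1,2,…,n))). Hence PF(u) is a deformation of PF((1,2,…,n)). -/
noncomputable section

/-- `a` is a `u`-parking function. -/
def IsParkingFunction (n : ℕ) (u a : Fin n → ℝ) : Prop :=
  (∀ i, 0 ≤ a i) ∧
    ∃ σ : Equiv.Perm (Fin n), Monotone (fun i => a (σ i)) ∧ ∀ i, a (σ i) ≤ u i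

/-- The parking function polytope. -/
def PF (n : ℕ) (u : Fin n → ℝ) : Set (Fin n → ℝ) :=
  convexHull ℝ {a | IsParkingFunction n u a}

/-- The normal cone of `P` at `v`. -/
def ncone (n : ℕ) (P : Set (Fin n → ℝ)) (v : Fin n → ℝ) : Set (Fin n → ℝ) :=
  {w | ∀ y ∈ P, ∑ i, w i * y i ≤ ∑ i, w i * v i}

/-- The vector `(1, 2, …, n)`. -/
def stdU (n : ℕ) : Fin n → ℝ := fun i => (i : ℕ) + 1

/-!
Sort `w` along a permutation `τ` and let `m` be the number of its nonpositive entries. By the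
rearrangement inequality, the point which is `0` at `τ 0, …, τ (m - 1)` and `u i` at `τ i` for
`m ≤ i` maximizes `w` over `PF(u)`. So the chamber of all `w` with the same `τ` and `m` lies in the
normal cone of `PF(u)` at that point; the chambers do not depend on `u`, and they are exactly the
normal cones at the vertices when `u` is positive and strictly increasing.

The normal cone at any vertex `v` of `PF(u)` is the union of the chambers attached to `v`: `v` is
the unique maximizer, among the finitely many candidate points, of some functional `w₀`, so moving
`w` slightly in the direction `w₀` lands in a chamber attached to `v`, and chambers are closed.
-/

open Set Filter Topology

theorem tendsto_add_smul_nhdsGT_zero {E : Type*} [AddCommMonoid E] [Module ℝ E]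
    [TopologicalSpace E] [ContinuousAdd E] [ContinuousSMul ℝ E] (x d : E) :
    Tendsto (fun ε : ℝ ↦ x + ε • d) (𝓝[>] 0) (𝓝 x) := by
  have hcont : Continuous fun ε : ℝ ↦ x + ε • d := by fun_prop
  simpa using (hcont.tendsto 0).mono_left nhdsWithin_le_nhds

section NormalCone

variable {n : ℕ} {P : Set (Fin n → ℝ)} {v w x : Fin n → ℝ}

theorem mem_ncone : w ∈ ncone n P v ↔ ∀ y ∈ P, w ⬝ᵥ y ≤ w ⬝ᵥ v := Iff.rfl

theorem ncone_convexHull (A : Set (Fin n → ℝ)) (v : Fin n → ℝ) :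
    ncone n (convexHull ℝ A) v = ncone n A v := by
  refine Subset.antisymm (fun w hw y hy ↦ hw y (subset_convexHull ℝ A hy)) fun w hw ↦ ?_
  exact convexHull_min hw (convex_halfSpace_le (dotProductEquiv ℝ (Fin n) w).isLinear _)

theorem dotProduct_lt_of_mem_interior_ncone (hw : w ∈ interior (ncone n P v))
    (hx : x ∈ P) (hxv : x ≠ v) : w ⬝ᵥ x < w ⬝ᵥ v := by
  obtain ⟨ε, hmem, hε⟩ := (((tendsto_add_smul_nhdsGT_zero w (x - v)).eventually
    (mem_interior_iff_mem_nhds.1 hw)).and self_mem_nhdsWithin).exists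
  have hle : w ⬝ᵥ (x - v) + ε * ((x - v) ⬝ᵥ (x - v)) ≤ 0 := by
    have := mem_ncone.1 hmem x hx
    rwa [← sub_nonpos, ← dotProduct_sub, add_dotProduct, smul_dotProduct, smul_eq_mul] at this
  have hpos : 0 < (x - v) ⬝ᵥ (x - v) := by
    simpa using Matrix.dotProduct_star_self_pos_iff.2 (sub_ne_zero.2 hxv)
  have := mul_pos (mem_Ioi.1 hε) hpos
  rw [← sub_neg, ← dotProduct_sub]
  linarith

theorem mem_extremePoints_of_interior_ncone_nonempty (hv : v ∈ P)
    (h : (interior (ncone n P v)).Nonempty) : v ∈ P.extremePoints ℝ := by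
  obtain ⟨w, hw⟩ := h
  refine exposedPoints_subset_extremePoints
    ⟨hv, (dotProductEquiv ℝ (Fin n) w).toContinuousLinearMap, fun y hy ↦
      ⟨mem_ncone.1 (interior_subset hw) y hy, fun hvy ↦ ?_⟩⟩
  by_contra hyv
  exact (dotProduct_lt_of_mem_interior_ncone hw hy hyv).not_ge hvy

theorem exists_dotProduct_lt_of_mem_extremePoints (hP : Convex ℝ P) (hv : v ∈ P.extremePoints ℝ)
    {F : Set (Fin n → ℝ)} (hF : F.Finite) (hFP : F ⊆ P) :
    ∃ w : Fin n → ℝ, ∀ y ∈ F, y ≠ v → w ⬝ᵥ y < w ⬝ᵥ v := by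
  have hv' : v ∉ convexHull ℝ (F \ {v}) := fun h ↦
    (hP.mem_extremePoints_iff_mem_sdiff_convexHull_sdiff.1 hv).2
      (convexHull_mono (sdiff_subset_sdiff_left hFP) h)
  obtain ⟨f, c, hfc, hcv⟩ := geometric_hahn_banach_closed_point (convex_convexHull ℝ _)
    (hF.sdiff.isClosed_convexHull ℝ) hv'
  obtain ⟨w, hw⟩ := (dotProductEquiv ℝ (Fin n)).surjective f.toLinearMap
  have hwf : ∀ y, w ⬝ᵥ y = f y := LinearMap.congr_fun hw
  refine ⟨w, fun y hy hyv ↦ ?_⟩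
  rw [hwf, hwf]
  exact (hfc y (subset_convexHull ℝ _ ⟨hy, hyv⟩)).trans hcv

theorem ncone_eq_iUnion_of_isClosed_cover {ι : Type*} [Finite ι] (hP : Convex ℝ P)
    {C : ι → Set (Fin n → ℝ)} {p : ι → Fin n → ℝ} (hclosed : ∀ i, IsClosed (C i))
    (hcover : ⋃ i, C i = univ) (hp : ∀ i, p i ∈ P) (hC : ∀ i, C i ⊆ ncone n P (p i))
    (hv : v ∈ P.extremePoints ℝ) : ncone n P v = ⋃ i ∈ {i | p i = v}, C i := by
  refine Subset.antisymm (fun w hw ↦ ?_) (iUnion₂_subset fun i hi ↦ hi ▸ hC i)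
  obtain ⟨w₀, hw₀⟩ := exists_dotProduct_lt_of_mem_extremePoints hP hv (finite_range p)
    (range_subset_iff.2 hp)
  have hperturb : ∀ ε > (0 : ℝ), w + ε • w₀ ∈ ⋃ i ∈ {i | p i = v}, C i := by
    intro ε hε
    obtain ⟨i, hi⟩ := mem_iUnion.1 (hcover ▸ mem_univ (w + ε • w₀))
    refine mem_biUnion (x := i) ?_ hi
    by_contra hne
    have hmax := mem_ncone.1 (hC i hi) v hv.1
    simp only [add_dotProduct, smul_dotProduct, smul_eq_mul] at hmax
    have hlt := mul_lt_mul_of_pos_left (hw₀ (p i) (mem_range_self i) hne) hε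
    linarith [mem_ncone.1 hw (p i) (hp i)]
  exact ((toFinite _).isClosed_biUnion fun i _ ↦ hclosed i).mem_of_tendsto
    (tendsto_add_smul_nhdsGT_zero w w₀) (eventually_mem_nhdsWithin.mono hperturb)

end NormalCone

section DotProduct

variable {ι R : Type*} [Fintype ι] [DecidableEq ι] [NonUnitalNonAssocRing R]

theorem dotProduct_update_right (w x : ι → R) (j : ι) (c : R) :
    w ⬝ᵥ Function.update x j c = w ⬝ᵥ x + w j * (c - x j) := by
  rw [← sub_eq_iff_eq_add', ← dotProduct_sub, ← dotProduct_single]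
  congr 1
  ext k
  obtain rfl | hk := eq_or_ne k j <;> simp [*]

theorem dotProduct_comp_swap (w x : ι → R) (i j : ι) :
    w ⬝ᵥ (x ∘ Equiv.swap i j) = w ⬝ᵥ x + (w i - w j) * (x j - x i) := by
  obtain rfl | hij := eq_or_ne i j
  · simp
  · rw [Equiv.comp_swap_eq_update, dotProduct_update_right, dotProduct_update_right,
      Function.update_of_ne hij, ← neg_sub (x j) (x i), mul_neg, sub_mul]
    abel

end DotProduct

section ParkingFunction

variable {n : ℕ} {u a w x : Fin n → ℝ}

theorem isParkingFunction_of_comp_perm_le (hu : Monotone u) (ha : 0 ≤ a)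
    (σ : Equiv.Perm (Fin n)) (h : a ∘ σ ≤ u) : IsParkingFunction n u a := by
  have hsort : Monotone (a ∘ Tuple.sort a) := Tuple.monotone_sort a
  refine ⟨ha, Tuple.sort a, hsort, fun i ↦ ?_⟩
  have hcard : Finset.card {k | (a ∘ Tuple.sort a) k ≤ u i} = Finset.card {k | (a ∘ σ) k ≤ u i} :=
    Finset.card_equiv ((Tuple.sort a).trans σ.symm) fun k ↦ by simp
  refine (Tuple.lt_card_le_iff_apply_le_of_monotone (f := a ∘ Tuple.sort a) hsort).1 ?_
  calc (i : ℕ) < (Finset.Iic i).card := by simp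
    _ ≤ Finset.card {k | (a ∘ σ) k ≤ u i} := Finset.card_le_card fun k hk ↦ by
      simpa using (h k).trans (hu (Finset.mem_Iic.1 hk))
    _ = _ := hcard.symm

theorem IsParkingFunction.comp_perm (ha : IsParkingFunction n u a) (e : Equiv.Perm (Fin n)) :
    IsParkingFunction n u (a ∘ e) := by
  obtain ⟨ha0, σ, hmono, hle⟩ := ha
  exact ⟨fun i ↦ ha0 (e i), σ.trans e.symm, by simpa using hmono, by simpa using hle⟩

theorem IsParkingFunction.mem_PF (ha : IsParkingFunction n u a) : a ∈ PF n u :=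
  subset_convexHull ℝ _ ha

theorem dotProduct_comp_perm_le {f : Fin n → ℝ} {τ : Equiv.Perm (Fin n)} (hf : Monotone (f ∘ τ))
    (hu : Monotone u) (σ : Equiv.Perm (Fin n)) : (f ∘ σ) ⬝ᵥ u ≤ (f ∘ τ) ⬝ᵥ u := by
  simpa [dotProduct] using
    (hf.monovary hu).sum_comp_perm_mul_le_sum_mul (σ := σ.trans τ.symm)

theorem IsParkingFunction.dotProduct_le {τ : Equiv.Perm (Fin n)} (ha : IsParkingFunction n u a)
    (hu : Monotone u) (hw : Monotone (w⁺ ∘ τ)) : w ⬝ᵥ a ≤ (w⁺ ∘ τ) ⬝ᵥ u := by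
  obtain ⟨ha0, σ, -, hle⟩ := ha
  calc w ⬝ᵥ a ≤ w⁺ ⬝ᵥ a := dotProduct_le_dotProduct_of_nonneg_right (le_posPart w) ha0
    _ = (w⁺ ∘ σ) ⬝ᵥ (a ∘ σ) := (comp_equiv_dotProduct_comp_equiv _ _ σ).symm
    _ ≤ (w⁺ ∘ σ) ⬝ᵥ u :=
      dotProduct_le_dotProduct_of_nonneg_left hle fun i ↦ posPart_nonneg w (σ i)
    _ ≤ (w⁺ ∘ τ) ⬝ᵥ u := dotProduct_comp_perm_le hw hu σ

theorem mul_sub_nonpos_of_mem_ncone_PF (hu : Monotone u) (hx : 0 ≤ x) {σ : Equiv.Perm (Fin n)}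
    (hxu : x ∘ σ ≤ u) (hw : w ∈ ncone n (PF n u) x) {i : Fin n} {c : ℝ} (hc : c ∈ Icc 0 (u i)) :
    w (σ i) * (c - x (σ i)) ≤ 0 := by
  have hpark : IsParkingFunction n u (Function.update x (σ i) c) := by
    refine isParkingFunction_of_comp_perm_le hu (le_update_iff.2 ⟨hc.1, fun j _ ↦ hx j⟩) σ ?_
    rw [Function.update_comp_eq_of_injective x σ.injective]
    exact update_le_iff.2 ⟨hc.2, fun j _ ↦ hxu j⟩
  have := mem_ncone.1 hw _ hpark.mem_PF
  rwa [dotProduct_update_right, add_le_iff_nonpos_right] at this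

theorem IsParkingFunction.sub_mul_sub_nonpos (hx : IsParkingFunction n u x)
    (hw : w ∈ ncone n (PF n u) x) (i j : Fin n) : (w i - w j) * (x j - x i) ≤ 0 := by
  have := mem_ncone.1 hw _ (hx.comp_perm (Equiv.swap i j)).mem_PF
  rwa [dotProduct_comp_swap, add_le_iff_nonpos_right] at this

end ParkingFunction

/-- The maximal cones of the common fan: the vectors that are nonpositive at the first `m` places
listed by `τ`, and nonnegative and increasing along the remaining ones. -/
def chamber {n : ℕ} (τ : Equiv.Perm (Fin n)) (m : ℕ) : Set (Fin n → ℝ) :=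
  {w | (∀ i : Fin n, (i : ℕ) < m → w (τ i) ≤ 0) ∧ (∀ i : Fin n, m ≤ i → 0 ≤ w (τ i)) ∧
    MonotoneOn (w ∘ τ) {i | m ≤ i}}

/-- The point of `PF(u)` attached to `chamber τ m`: zero at the first `m` places listed by `τ`, and
`u i` at the place `τ i` for `m ≤ i`. Distinct chambers may give the same point. -/
def chamberPoint {n : ℕ} (u : Fin n → ℝ) (τ : Equiv.Perm (Fin n)) (m : ℕ) : Fin n → ℝ :=
  {i : Fin n | m ≤ i}.indicator u ∘ τ.symm

section Chamber

variable {n : ℕ} {u w : Fin n → ℝ}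

theorem isClosed_chamber (τ : Equiv.Perm (Fin n)) (m : ℕ) : IsClosed (chamber τ m) := by
  simp only [chamber, ofPred_and, ofPred_forall]
  refine .inter ?_ (.inter ?_ ?_)
  · exact isClosed_iInter fun i ↦ isClosed_iInter fun _ ↦
      isClosed_le (continuous_apply _) continuous_const
  · exact isClosed_iInter fun i ↦ isClosed_iInter fun _ ↦
      isClosed_le continuous_const (continuous_apply _)
  · exact isClosed_monotoneOn.preimage (f := fun w : Fin n → ℝ ↦ w ∘ τ) (by fun_prop)

theorem exists_mem_chamber (w : Fin n → ℝ) :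
    ∃ τ : Equiv.Perm (Fin n), ∃ m ≤ n, w ∈ chamber τ m := by
  have hsort : Monotone (w ∘ Tuple.sort w) := Tuple.monotone_sort w
  have hlt (i : Fin n) : (i : ℕ) < Finset.card {k | (w ∘ Tuple.sort w) k ≤ 0} ↔
      w (Tuple.sort w i) ≤ 0 :=
    Tuple.lt_card_le_iff_apply_le_of_monotone (f := w ∘ Tuple.sort w) hsort
  refine ⟨Tuple.sort w, _, (Finset.card_le_univ _).trans_eq (Fintype.card_fin n),
    fun i ↦ (hlt i).1, fun i hi ↦ ?_, hsort.monotoneOn _⟩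
  exact (not_le.1 (mt (hlt i).2 hi.not_gt)).le

theorem iUnion_chamber :
    ⋃ p : Equiv.Perm (Fin n) × Fin (n + 1), chamber p.1 p.2 = univ := by
  refine eq_univ_of_forall fun w ↦ ?_
  obtain ⟨τ, m, hm, hw⟩ := exists_mem_chamber w
  exact mem_iUnion.2 ⟨(τ, ⟨m, Nat.lt_succ_of_le hm⟩), hw⟩

theorem interior_chamber_nonempty (τ : Equiv.Perm (Fin n)) (m : ℕ) :
    (interior (chamber τ m)).Nonempty := by
  let w₀ : Fin n → ℝ := fun j ↦ ((τ.symm j : ℕ) : ℝ) - m + 1 / 2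
  have hw₀ (i : Fin n) : w₀ (τ i) = (i : ℝ) - m + 1 / 2 := by simp [w₀]
  have hcont (i : Fin n) : Tendsto (fun w : Fin n → ℝ ↦ w (τ i)) (𝓝 w₀) (𝓝 (w₀ (τ i))) :=
    (continuous_apply (τ i)).tendsto w₀
  refine ⟨w₀, mem_interior_iff_mem_nhds.2 ?_⟩
  have hneg : ∀ᶠ w in 𝓝 w₀, ∀ i : Fin n, (i : ℕ) < m → w (τ i) < 0 := by
    refine eventually_all.2 fun i ↦ eventually_all.2 fun hi ↦ (hcont i).eventually_lt_const ?_
    have : (i : ℝ) + 1 ≤ m := by exact_mod_cast hi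
    linarith [hw₀ i]
  have hpos : ∀ᶠ w in 𝓝 w₀, ∀ i : Fin n, m ≤ i → 0 < w (τ i) := by
    refine eventually_all.2 fun i ↦ eventually_all.2 fun hi ↦ (hcont i).eventually_const_lt ?_
    have : (m : ℝ) ≤ i := by exact_mod_cast hi
    linarith [hw₀ i]
  have hmono : ∀ᶠ w in 𝓝 w₀, StrictMono (w ∘ τ) := by
    refine eventually_all.2 fun i ↦ eventually_all.2 fun j ↦ eventually_all.2 fun hij ↦
      (hcont i).eventually_lt (hcont j) ?_
    have : (i : ℝ) < j := by exact_mod_cast hij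
    linarith [hw₀ i, hw₀ j]
  filter_upwards [hneg, hpos, hmono] with w hneg hpos hmono
  exact ⟨fun i hi ↦ (hneg i hi).le, fun i hi ↦ (hpos i hi).le, hmono.monotone.monotoneOn _⟩

theorem monotone_posPart_comp_of_mem_chamber {τ : Equiv.Perm (Fin n)} {m : ℕ}
    (hw : w ∈ chamber τ m) : Monotone (w⁺ ∘ τ) := by
  obtain ⟨hneg, -, hmono⟩ := hw
  intro i j hij
  simp only [Function.comp_apply, Pi.posPart_apply]
  obtain hi | hi := lt_or_ge (i : ℕ) m
  · rw [posPart_eq_zero.2 (hneg i hi)]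
    exact posPart_nonneg _
  · exact posPart_mono (hmono hi (hi.trans hij) hij)

theorem chamberPoint_comp (u : Fin n → ℝ) (τ : Equiv.Perm (Fin n)) (m : ℕ) :
    chamberPoint u τ m ∘ τ = {i : Fin n | m ≤ i}.indicator u := by
  simp [chamberPoint, Function.comp_assoc]

theorem chamberPoint_apply_of_lt (u : Fin n → ℝ) (τ : Equiv.Perm (Fin n)) {m : ℕ} {i : Fin n}
    (hi : (i : ℕ) < m) : chamberPoint u τ m (τ i) = 0 := by
  simp [chamberPoint, hi]

theorem chamberPoint_apply_of_le (u : Fin n → ℝ) (τ : Equiv.Perm (Fin n)) {m : ℕ} {i : Fin n}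
    (hi : m ≤ i) : chamberPoint u τ m (τ i) = u i := by
  simp [chamberPoint, hi]

theorem chamberPoint_nonneg (hu : 0 ≤ u) (τ : Equiv.Perm (Fin n)) (m : ℕ) :
    0 ≤ chamberPoint u τ m := fun _ ↦ indicator_nonneg (fun i _ ↦ hu i) _

theorem chamberPoint_comp_le (hu : 0 ≤ u) (τ : Equiv.Perm (Fin n)) (m : ℕ) :
    chamberPoint u τ m ∘ τ ≤ u := by
  rw [chamberPoint_comp]
  exact indicator_le_self' fun i _ ↦ hu i

theorem isParkingFunction_chamberPoint (hmono : Monotone u) (hu : 0 ≤ u) (τ : Equiv.Perm (Fin n))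
    (m : ℕ) : IsParkingFunction n u (chamberPoint u τ m) :=
  isParkingFunction_of_comp_perm_le hmono (chamberPoint_nonneg hu τ m) τ
    (chamberPoint_comp_le hu τ m)

theorem dotProduct_chamberPoint_of_mem_chamber {τ : Equiv.Perm (Fin n)} {m : ℕ}
    (hw : w ∈ chamber τ m) (u : Fin n → ℝ) : w ⬝ᵥ chamberPoint u τ m = (w⁺ ∘ τ) ⬝ᵥ u := by
  rw [chamberPoint, dotProduct_comp_equiv_symm]
  refine Finset.sum_congr rfl fun i _ ↦ ?_
  simp only [Function.comp_apply, Pi.posPart_apply]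
  obtain hi | hi := lt_or_ge (i : ℕ) m
  · simp [posPart_eq_zero.2 (hw.1 i hi), hi]
  · simp [posPart_eq_self.2 (hw.2.1 i hi), hi]

theorem chamber_subset_ncone_PF (hmono : Monotone u) (τ : Equiv.Perm (Fin n)) (m : ℕ) :
    chamber τ m ⊆ ncone n (PF n u) (chamberPoint u τ m) := by
  intro w hw
  rw [PF, ncone_convexHull, mem_ncone, dotProduct_chamberPoint_of_mem_chamber hw]
  exact fun a ha ↦ ha.dotProduct_le hmono (monotone_posPart_comp_of_mem_chamber hw)

theorem ncone_PF_chamberPoint (hmono : StrictMono u) (hpos : ∀ i, 0 < u i)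
    (τ : Equiv.Perm (Fin n)) (m : ℕ) :
    ncone n (PF n u) (chamberPoint u τ m) = chamber τ m := by
  have hu : 0 ≤ u := fun i ↦ (hpos i).le
  refine Subset.antisymm (fun w hw ↦ ?_) (chamber_subset_ncone_PF hmono.monotone τ m)
  have hexchange {i : Fin n} {c : ℝ} (hc : c ∈ Icc 0 (u i)) :
      w (τ i) * (c - chamberPoint u τ m (τ i)) ≤ 0 :=
    mul_sub_nonpos_of_mem_ncone_PF hmono.monotone (chamberPoint_nonneg hu τ m)
      (chamberPoint_comp_le hu τ m) hw hc
  refine ⟨fun i hi ↦ ?_, fun i hi ↦ ?_, fun i hi j hj hij ↦ ?_⟩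
  · have := hexchange (right_mem_Icc.2 (hu i))
    rw [chamberPoint_apply_of_lt u τ hi, sub_zero] at this
    exact nonpos_of_mul_nonpos_left this (hpos i)
  · have := hexchange (left_mem_Icc.2 (hu i))
    rw [chamberPoint_apply_of_le u τ hi, zero_sub, mul_neg, neg_nonpos] at this
    exact nonneg_of_mul_nonneg_left this (hpos i)
  · obtain rfl | hlt := hij.eq_or_lt
    · exact le_rfl
    have := (isParkingFunction_chamberPoint hmono.monotone hu τ m).sub_mul_sub_nonpos hw
      (τ i) (τ j)
    rw [chamberPoint_apply_of_le u τ hi, chamberPoint_apply_of_le u τ hj] at this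
    exact sub_nonpos.1 (nonpos_of_mul_nonpos_left this (sub_pos.2 (hmono hlt)))

theorem chamberPoint_mem_extremePoints (hmono : Monotone u) (hu : 0 ≤ u)
    (τ : Equiv.Perm (Fin n)) (m : ℕ) :
    chamberPoint u τ m ∈ (PF n u).extremePoints ℝ :=
  mem_extremePoints_of_interior_ncone_nonempty
    (isParkingFunction_chamberPoint hmono hu τ m).mem_PF
    ((interior_chamber_nonempty τ m).mono (interior_mono (chamber_subset_ncone_PF hmono τ m)))

theorem ncone_PF_eq_iUnion_chamber (hmono : Monotone u) (hu : 0 ≤ u) {v : Fin n → ℝ}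
    (hv : v ∈ (PF n u).extremePoints ℝ) :
    ncone n (PF n u) v =
      ⋃ p ∈ {p : Equiv.Perm (Fin n) × Fin (n + 1) | chamberPoint u p.1 p.2 = v},
        chamber p.1 p.2 :=
  ncone_eq_iUnion_of_isClosed_cover (convex_convexHull ℝ _) (fun p ↦ isClosed_chamber p.1 p.2)
    iUnion_chamber (fun p ↦ (isParkingFunction_chamberPoint hmono hu p.1 p.2).mem_PF)
    (fun p ↦ chamber_subset_ncone_PF hmono p.1 p.2) hv

end Chamber

theorem stdU_strictMono (n : ℕ) : StrictMono (stdU n) := fun i j hij ↦ by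
  simpa [stdU] using hij

theorem stdU_pos (n : ℕ) (i : Fin n) : 0 < stdU n i := by
  unfold stdU
  positivity

theorem normal_fan_coarsens_stellahedron_general {n : ℕ} {u t : Fin n → ℝ} (hu : Monotone u)
    (hu0 : ∀ i, 0 ≤ u i) (ht : StrictMono t) (ht0 : ∀ i, 0 < t i) :
    ∀ v ∈ (PF n u).extremePoints ℝ, ∃ S ⊆ (PF n t).extremePoints ℝ,
      ncone n (PF n u) v = ⋃ w ∈ S, ncone n (PF n t) w := by
  intro v hv
  refine ⟨(fun p : Equiv.Perm (Fin n) × Fin (n + 1) ↦ chamberPoint t p.1 p.2) ''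
    {p | chamberPoint u p.1 p.2 = v}, ?_, ?_⟩
  · rintro _ ⟨p, -, rfl⟩
    exact chamberPoint_mem_extremePoints ht.monotone (fun i ↦ (ht0 i).le) p.1 p.2
  · simp only [biUnion_image, ncone_PF_chamberPoint ht ht0]
    exact ncone_PF_eq_iUnion_chamber hu hu0 hv

/-- The normal fan of every parking function polytope coarsens the normal fan of
`PF((1,2,…,n))`: for each extreme point `v` of `PF(u)` there is a set `S` of
extreme points of the stellahedron `PF((1,2,…,n))` whose normal cones union to
the normal cone of `PF(u)` at `v`.  Hence `PF(u)` is a deformation of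
`PF((1,2,…,n))`. -/
theorem normal_fan_coarsens_stellahedron
    (n : ℕ) (hn : 1 ≤ n) (u : Fin n → ℝ)
    (hmono : Monotone u) (hnonneg : ∀ i, 0 ≤ u i) (hne : u ≠ 0) :
    ∀ v ∈ Set.extremePoints ℝ (PF n u),
      ∃ S ⊆ Set.extremePoints ℝ (PF n (stdU n)),
        ncone n (PF n u) v = ⋃ w ∈ S, ncone n (PF n (stdU n)) w :=
  normal_fan_coarsens_stellahedron_general hmono hnonneg (stdU_strictMono n) (stdU_pos n)
end
end

section
/- Let n ≥ 3. The parking function polytope PF(u) is simplicial — i.e., every facet of PF(u) contains exactly n extreme points of PF(u) — if and only if the multiplicity vector of u is m(u) = (n−1, 1), that is, u = (0,…,0,d) for some d > 0, in which case PF(u) is the simplex conv(0, d·e_1, …, d·e_n). -/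
noncomputable section

/-- `F` is an exposed face of `P`. -/
def IsExposedFaceOf (n : ℕ) (P F : Set (Fin n → ℝ)) : Prop :=
  ∃ w : Fin n → ℝ, F = {x ∈ P | ∀ y ∈ P, ∑ i, w i * y i ≤ ∑ i, w i * x i}

/-- `F` is a facet of the `n`-dimensional polytope `P ⊆ ℝⁿ`. -/
def IsFacetOf (n : ℕ) (P F : Set (Fin n → ℝ)) : Prop :=
  IsExposedFaceOf n P F ∧ F.Nonempty ∧
    Module.finrank ℝ (affineSpan ℝ F).direction = n - 1

/-!
The vertices of `PF(u)` are the rearrangements of the truncations `(0, …, 0, uₖ, …, uₙ)`: the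
inequalities `xᵢ ≥ 0` and `∑ j ≥ i, xⱼ ≤ ∑ j ≥ i, uⱼ`, valid on `PF(u)`, determine such a point when
they are tight. On the facet `x₁ = 0` this exhibits the `n` vertices `0` and `uₙ • eⱼ` with `j ≠ 1`,
and if `uₙ₋₁ > 0`, also the vertex `(0, …, 0, uₙ₋₁, uₙ)`: one too many for a simplicial polytope.
If instead `uₙ` is the only nonzero coordinate, `PF(u)` is a simplex, and by the Krein–Milman
theorem an exposed face of a simplex is the convex hull of the affinely independent vertices that
it contains, so its dimension is one less than their number.
-/

section ConvexGeometry

theorem mem_extremePoints_of_isMaxOn {𝕜 E : Type*} [Field 𝕜] [LinearOrder 𝕜]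
    [IsStrictOrderedRing 𝕜] [AddCommGroup E] [Module 𝕜 E] {P : Set E} {p : E} (hp : p ∈ P)
    (hsep : ∀ y ∈ P, (∀ φ : E →ₗ[𝕜] 𝕜, IsMaxOn φ P p → φ y = φ p) → y = p) :
    p ∈ P.extremePoints 𝕜 := by
  refine mem_extremePoints_iff_left.2 ⟨hp, fun y hy z hz hyz => hsep y hy fun φ hφ => ?_⟩
  obtain ⟨a, b, ha, hb, hab, rfl⟩ := hyz
  have hmean : φ (a • y + b • z) = a * φ y + b * φ z := by simp
  refine (hφ hy).antisymm (le_of_mul_le_mul_left ?_ ha)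
  calc a * φ (a • y + b • z) = φ (a • y + b • z) - b * φ (a • y + b • z) := by
        linear_combination φ (a • y + b • z) * hab
    _ ≤ φ (a • y + b • z) - b * φ z := by gcongr; exact hφ hz
    _ = a * φ y := by rw [hmean]; ring

theorem affineIndependent_insert_zero {𝕜 E : Type*} [DivisionRing 𝕜] [AddCommGroup E] [Module 𝕜 E]
    {s : Set E} (hs : LinearIndepOn 𝕜 id s) :
    AffineIndependent 𝕜 ((↑) : ↥(insert 0 s) → E) := by
  have hne : ∀ v ∈ s, v ≠ 0 := fun v hv => hs.ne_zero hv
  have himage : {0} ∪ (fun v : E => v +ᵥ (0 : E)) '' s = insert 0 s := by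
    simp only [vadd_eq_add, add_zero, Set.image_id', Set.singleton_union]
  exact himage ▸
    (linearIndependent_set_iff_affineIndependent_vadd_union_singleton 𝕜 hne (0 : E)).1 hs

section Faces

variable {E : Type*} [AddCommGroup E] [Module ℝ E] [TopologicalSpace E] [T2Space E]
  [IsTopologicalAddGroup E] [ContinuousSMul ℝ E] [LocallyConvexSpace ℝ E] {V F : Set E}

theorem convexHull_inter_extremePoints_of_isExposed (hV : V.Finite)
    (hF : IsExposed ℝ (convexHull ℝ V) F) :
    convexHull ℝ (F ∩ (convexHull ℝ V).extremePoints ℝ) = F := by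
  have hfin : (F ∩ (convexHull ℝ V).extremePoints ℝ).Finite :=
    hV.subset (Set.inter_subset_right.trans extremePoints_convexHull_subset)
  have hKreinMilman := closure_convexHull_extremePoints
    (hF.isCompact (hV.isCompact_convexHull ℝ)) (hF.convex (convex_convexHull ℝ V))
  rwa [hF.isExtreme.extremePoints_eq, (hfin.isClosed_convexHull ℝ).closure_eq] at hKreinMilman

theorem card_inter_extremePoints_of_affineIndependent (hV : V.Finite)
    (hind : AffineIndependent ℝ ((↑) : V → E)) (hF : IsExposed ℝ (convexHull ℝ V) F)
    (hne : F.Nonempty) :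
    Nat.card ↥(F ∩ (convexHull ℝ V).extremePoints ℝ) =
      Module.finrank ℝ (affineSpan ℝ F).direction + 1 := by
  set S := F ∩ (convexHull ℝ V).extremePoints ℝ
  have hSV : S ⊆ V := Set.inter_subset_right.trans extremePoints_convexHull_subset
  have hSF : convexHull ℝ S = F := convexHull_inter_extremePoints_of_isExposed hV hF
  have : Fintype S := (hV.subset hSV).fintype
  have : Nonempty S := (convexHull_nonempty_iff.1 (hSF ▸ hne)).to_subtype
  rw [← hSF, affineSpan_convexHull, direction_affineSpan, Nat.card_eq_fintype_card,
    ← (hind.mono hSV).finrank_vectorSpan_add_one, Subtype.range_coe]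

end Faces

theorem direction_affineSpan_eq_ker_proj {ι 𝕜 : Type*} [Finite ι] [DecidableEq ι]
    [DivisionRing 𝕜]
    {F : Set (ι → 𝕜)} {i : ι} (hF : ∀ x ∈ F, x i = 0) (hzero : 0 ∈ F)
    (hsingle : ∀ j ≠ i, ∃ c ≠ 0, Pi.single j c ∈ F) :
    (affineSpan 𝕜 F).direction = LinearMap.ker (LinearMap.proj (φ := fun _ : ι => 𝕜) i) := by
  have := Fintype.ofFinite ι
  have hspan : vectorSpan 𝕜 F = Submodule.span 𝕜 F := by
    simp [vectorSpan_eq_span_vsub_set_right 𝕜 hzero]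
  rw [direction_affineSpan, hspan]
  refine le_antisymm (Submodule.span_le.2 hF) fun x (hx : x i = 0) => ?_
  rw [← Finset.univ_sum_single x]
  refine Submodule.sum_mem _ fun j _ => ?_
  obtain rfl | hj := eq_or_ne j i
  · simp [hx]
  · obtain ⟨c, hc, hmem⟩ := hsingle j hj
    have hscale : Pi.single j (x j) = (x j / c) • (Pi.single j c : ι → 𝕜) := by
      rw [← Pi.single_smul, smul_eq_mul, div_mul_cancel₀ _ hc]
    exact hscale ▸ Submodule.smul_mem _ _ (Submodule.subset_span hmem)

end ConvexGeometry

section Polytopes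

variable {n : ℕ}

/-- A polytope in `ℝⁿ` is simplicial, expressed by the number of extreme points of its facets. -/
def IsSimplicial (n : ℕ) (P : Set (Fin n → ℝ)) : Prop :=
  ∀ F : Set (Fin n → ℝ), IsFacetOf n P F → Nat.card ↥(F ∩ P.extremePoints ℝ) = n

/-- The vertices `0, d • e₁, …, d • eₙ` of the corner simplex of edge length `d`. -/
def cornerVertices (n : ℕ) (d : ℝ) : Set (Fin n → ℝ) :=
  insert 0 {x | ∃ i : Fin n, x = d • Pi.single i (1 : ℝ)}

theorem IsExposedFaceOf.isExposed {P F : Set (Fin n → ℝ)} (hF : IsExposedFaceOf n P F) :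
    IsExposed ℝ P F := by
  obtain ⟨w, rfl⟩ := hF
  exact fun _ => ⟨∑ i, w i • ContinuousLinearMap.proj (R := ℝ) (φ := fun _ : Fin n => ℝ) i, by simp⟩

theorem cornerVertices_eq_insert_range (d : ℝ) :
    cornerVertices n d = insert 0 (Set.range fun i : Fin n => Pi.single i d) := by
  simp only [cornerVertices, Set.range, eq_comm, ← Pi.single_smul, smul_eq_mul, mul_one]

theorem finite_cornerVertices (d : ℝ) : (cornerVertices n d).Finite := by
  rw [cornerVertices_eq_insert_range]
  exact (Set.finite_range _).insert 0

theorem affineIndependent_cornerVertices {d : ℝ} (hd : d ≠ 0) :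
    AffineIndependent ℝ ((↑) : cornerVertices n d → Fin n → ℝ) := by
  rw [cornerVertices_eq_insert_range]
  exact affineIndependent_insert_zero
    (Pi.linearIndependent_single_of_ne_zero fun _ : Fin n => hd).linearIndepOn_id

theorem single_mem_convexHull_cornerVertices {t d : ℝ} (ht : 0 ≤ t) (htd : t ≤ d) (i : Fin n) :
    Pi.single i t ∈ convexHull ℝ (cornerVertices n d) := by
  have himage := image_segment ℝ (LinearMap.single ℝ (fun _ : Fin n => ℝ) i).toAffineMap 0 d
  simp only [LinearMap.coe_toAffineMap, LinearMap.coe_single, Pi.single_zero] at himage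
  have hsegment : Pi.single i t ∈ segment ℝ 0 (Pi.single i d : Fin n → ℝ) :=
    himage ▸ Set.mem_image_of_mem _ (Icc_subset_segment ⟨ht, htd⟩)
  rw [cornerVertices_eq_insert_range]
  exact segment_subset_convexHull (Set.mem_insert 0 _)
    (Set.mem_insert_of_mem 0 (Set.mem_range_self i)) hsegment

theorem isSimplicial_convexHull_cornerVertices (hn : 0 < n) {d : ℝ} (hd : d ≠ 0) :
    IsSimplicial n (convexHull ℝ (cornerVertices n d)) := by
  rintro F ⟨hface, hne, hdim⟩
  rw [card_inter_extremePoints_of_affineIndependent (finite_cornerVertices d)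
    (affineIndependent_cornerVertices hd) hface.isExposed hne, hdim, Nat.sub_add_cancel hn]

end Polytopes

theorem ncard_insert_zero_image_single {ι M : Type*} [DecidableEq ι] [Zero M] {c : M}
    (hc : c ≠ 0) {s : Set ι} (hs : s.Finite) :
    (insert 0 ((fun i => (Pi.single i c : ι → M)) '' s)).ncard = s.ncard + 1 := by
  have hinj : Function.Injective fun i => (Pi.single i c : ι → M) := by
    intro i j hij
    by_contra hne
    exact hc (by simpa [hne] using congrFun hij i)
  have hzero : 0 ∉ (fun i => (Pi.single i c : ι → M)) '' s := by
    rintro ⟨i, -, hi⟩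
    exact hc (Pi.single_eq_zero_iff.1 hi)
  rw [Set.ncard_insert_of_notMem hzero (hs.image _), Set.ncard_image_of_injective s hinj]

theorem monotone_indicator_of_isUpperSet {α M : Type*} [Preorder α] [Preorder M] [Zero M]
    {s : Set α} {f : α → M} (hf : Monotone f) (hnonneg : 0 ≤ f) (hs : IsUpperSet s) :
    Monotone (s.indicator f) := by
  intro i j hij
  by_cases hi : i ∈ s
  · simpa only [Set.indicator_of_mem hi, Set.indicator_of_mem (hs hij hi)] using hf hij
  · simpa only [Set.indicator_of_notMem hi] using Set.indicator_nonneg (fun i _ => hnonneg i) j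

namespace IsParkingFunction

variable {n : ℕ} {u a : Fin n → ℝ}

theorem comp_perm_s7 (ha : IsParkingFunction n u a) (τ : Equiv.Perm (Fin n)) :
    IsParkingFunction n u (a ∘ τ) := by
  obtain ⟨hnonneg, σ, hmono, hle⟩ := ha
  exact ⟨fun i => hnonneg (τ i), σ.trans τ.symm, by simpa using hmono, by simpa using hle⟩

theorem sum_le_sum (ha : IsParkingFunction n u a) (hu : Monotone u) {s : Finset (Fin n)}
    (hs : IsUpperSet (s : Set (Fin n))) : ∑ i ∈ s, a i ≤ ∑ i ∈ s, u i := by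
  obtain ⟨-, σ, -, hle⟩ := ha
  set w : Fin n → ℝ := (s : Set (Fin n)).indicator 1
  have hw : Monotone w := monotone_indicator_of_isUpperSet monotone_const zero_le_one hs
  have hsum (x : Fin n → ℝ) : ∑ i ∈ s, x i = ∑ i, x i * w i := by
    simp [w, Set.indicator_apply]
  calc ∑ i ∈ s, a i = ∑ i, a (σ i) * w (σ i) := by
        rw [hsum, Equiv.sum_comp σ fun i => a i * w i]
    _ ≤ ∑ i, u i * w (σ i) := by
        gcongr with i
        · exact Set.indicator_nonneg (fun _ _ => zero_le_one) _
        · exact hle i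
    _ ≤ ∑ i, u i * w i := (hu.monovary hw).sum_mul_comp_perm_le_sum_mul
    _ = ∑ i ∈ s, u i := (hsum u).symm

theorem indicator (hu : Monotone u) (hnonneg : ∀ i, 0 ≤ u i) {s : Set (Fin n)}
    (hs : IsUpperSet s) : IsParkingFunction n u (s.indicator u) :=
  ⟨Set.indicator_nonneg fun i _ => hnonneg i, 1,
    monotone_indicator_of_isUpperSet hu hnonneg hs, Set.indicator_le_self' fun i _ => hnonneg i⟩

end IsParkingFunction

namespace PF

variable {n : ℕ} {u x : Fin n → ℝ}

theorem nonneg (hx : x ∈ PF n u) (i : Fin n) : 0 ≤ x i :=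
  convexHull_min (fun _ ha => ha.1 i)
    (convex_halfSpace_ge (LinearMap.proj (R := ℝ) (φ := fun _ : Fin n => ℝ) i).isLinear 0) hx

theorem sum_le_sum (hu : Monotone u) (hx : x ∈ PF n u) {s : Finset (Fin n)}
    (hs : IsUpperSet (s : Set (Fin n))) : ∑ i ∈ s, x i ≤ ∑ i ∈ s, u i := by
  have hconv := convex_halfSpace_le
    (∑ i ∈ s, LinearMap.proj (R := ℝ) (φ := fun _ : Fin n => ℝ) i).isLinear (∑ i ∈ s, u i)
  simp only [LinearMap.sum_apply, LinearMap.proj_apply] at hconv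
  exact convexHull_min (fun a ha => ha.sum_le_sum hu hs) hconv hx

theorem image_funCongrLeft (τ : Equiv.Perm (Fin n)) :
    LinearEquiv.funCongrLeft ℝ ℝ τ '' PF n u = PF n u := by
  have himage : LinearEquiv.funCongrLeft ℝ ℝ τ '' {a | IsParkingFunction n u a} =
      {a | IsParkingFunction n u a} := by
    refine Set.Subset.antisymm (Set.image_subset_iff.2 fun a ha => ha.comp_perm_s7 τ) fun a ha => ?_
    exact ⟨a ∘ τ.symm, ha.comp_perm_s7 τ.symm, by ext; simp⟩
  rw [PF, ← LinearEquiv.coe_coe, LinearMap.image_convexHull, LinearEquiv.coe_coe, himage]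

theorem comp_perm_mem_extremePoints (hx : x ∈ (PF n u).extremePoints ℝ)
    (τ : Equiv.Perm (Fin n)) : x ∘ τ ∈ (PF n u).extremePoints ℝ := by
  rw [← image_funCongrLeft τ, ← image_extremePoints]
  exact ⟨x, hx, rfl⟩

theorem indicator_mem_extremePoints (hu : Monotone u) (hnonneg : ∀ i, 0 ≤ u i)
    {s : Set (Fin n)} (hs : IsUpperSet s) : s.indicator u ∈ (PF n u).extremePoints ℝ := by
  refine mem_extremePoints_of_isMaxOn
    (subset_convexHull ℝ _ (IsParkingFunction.indicator hu hnonneg hs)) fun y _ htight => ?_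
  have hsum {t : Finset (Fin n)} (ht : IsUpperSet (t : Set (Fin n))) (hts : ∀ i ∈ t, i ∈ s) :
      ∑ i ∈ t, y i = ∑ i ∈ t, u i := by
    have hsu : ∑ i ∈ t, s.indicator u i = ∑ i ∈ t, u i :=
      Finset.sum_congr rfl fun i hi => Set.indicator_of_mem (hts i hi) u
    simpa [hsu] using htight (∑ i ∈ t, LinearMap.proj i) fun z hz => by
      simpa [hsu] using sum_le_sum hu hz ht
  ext i
  by_cases hi : i ∈ s
  · have hIci := hsum (t := Finset.Ici i) (by simpa using isUpperSet_Ici i)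
      fun j hj => hs (Finset.mem_Ici.1 hj) hi
    have hIoi := hsum (t := Finset.Ioi i) (by simpa using isUpperSet_Ioi i)
      fun j hj => hs (Finset.mem_Ioi.1 hj).le hi
    rw [← Finset.add_sum_Ioi_eq_sum_Ici, ← Finset.add_sum_Ioi_eq_sum_Ici, hIoi] at hIci
    simpa [hi] using hIci
  · simpa [hi] using htight (-LinearMap.proj i) fun z hz => by simpa [hi] using nonneg hz i

theorem zero_mem_extremePoints (hu : Monotone u) (hnonneg : ∀ i, 0 ≤ u i) :
    0 ∈ (PF n u).extremePoints ℝ := by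
  simpa [← Pi.zero_def] using indicator_mem_extremePoints hu hnonneg isUpperSet_empty

theorem single_mem_extremePoints (hu : Monotone u) (hnonneg : ∀ i, 0 ≤ u i) {L : Fin n}
    (hL : IsTop L) (j : Fin n) : Pi.single j (u L) ∈ (PF n u).extremePoints ℝ := by
  have hmem := comp_perm_mem_extremePoints
    (indicator_mem_extremePoints hu hnonneg (isUpperSet_Ici L)) (Equiv.swap j L)
  rwa [hL.isMax.Ici_eq, Set.indicator_singleton, Pi.single_comp_equiv, Equiv.symm_swap,
    Equiv.swap_apply_right] at hmem

theorem eq_convexHull_cornerVertices (hu : Monotone u) (hnonneg : ∀ i, 0 ≤ u i) {L : Fin n}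
    (hL : IsTop L) (hzero : ∀ i ≠ L, u i = 0) :
    PF n u = convexHull ℝ (cornerVertices n (u L)) := by
  apply Set.Subset.antisymm <;> refine convexHull_min ?_ (convex_convexHull ℝ _)
  · rintro a ⟨ha, σ, -, hle⟩
    have hsingle : a = Pi.single (σ L) (a (σ L)) := by
      ext j
      obtain rfl | hj := eq_or_ne j (σ L)
      · rw [Pi.single_eq_same]
      · have hσj : σ.symm j ≠ L := fun h => hj (by rw [← h, σ.apply_symm_apply])
        have hle_zero : a j ≤ 0 := by simpa [hzero _ hσj] using hle (σ.symm j)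
        rw [Pi.single_eq_of_ne hj, hle_zero.antisymm (ha j)]
    exact hsingle ▸ single_mem_convexHull_cornerVertices (ha _) (hle L) _
  · rw [cornerVertices_eq_insert_range]
    rintro _ (rfl | ⟨i, rfl⟩)
    · exact (zero_mem_extremePoints hu hnonneg).1
    · exact (single_mem_extremePoints hu hnonneg hL i).1

theorem isFacetOf_coord_eq_zero (hu : Monotone u) (hnonneg : ∀ i, 0 ≤ u i) {L : Fin n}
    (hL : IsTop L) (hpos : 0 < u L) (i : Fin n) :
    IsFacetOf n (PF n u) {x ∈ PF n u | x i = 0} := by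
  have hzero : (0 : Fin n → ℝ) ∈ PF n u := (zero_mem_extremePoints hu hnonneg).1
  refine ⟨⟨Pi.single i (-1), ?_⟩, ⟨0, hzero, rfl⟩, ?_⟩
  · ext x
    simp only [Set.mem_ofPred_eq, Pi.single_apply, ite_mul, zero_mul, Finset.sum_ite_eq',
      Finset.mem_univ, if_true, neg_mul, one_mul, neg_le_neg_iff]
    exact and_congr_right fun hx => ⟨fun h y hy => h ▸ nonneg hy i,
      fun h => (h 0 hzero).antisymm (nonneg hx i)⟩
  · rw [direction_affineSpan_eq_ker_proj (F := {x ∈ PF n u | x i = 0}) (fun _ hx => hx.2)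
      ⟨hzero, rfl⟩ fun j hj => ⟨u L, hpos.ne', (single_mem_extremePoints hu hnonneg hL j).1,
        Pi.single_eq_of_ne hj.symm _⟩]
    have hproj : LinearMap.proj (R := ℝ) (φ := fun _ : Fin n => ℝ) i ≠ 0 :=
      fun h => one_ne_zero (α := ℝ) (by simpa using LinearMap.congr_fun h (Pi.single i 1))
    have hker := Module.Dual.finrank_ker_add_one_of_ne_zero hproj
    rw [Module.finrank_fin_fun] at hker
    omega

theorem not_isSimplicial (hu : Monotone u) (hnonneg : ∀ i, 0 ≤ u i) {Z K L : Fin n}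
    (hZK : Z < K) (hKL : K < L) (hL : IsTop L) (hpos : 0 < u K) :
    ¬ IsSimplicial n (PF n u) := by
  intro hsimp
  have hposL : 0 < u L := hpos.trans_le (hu hKL.le)
  set axisVertices : Set (Fin n → ℝ) := insert 0 ((fun j => Pi.single j (u L)) '' {Z}ᶜ)
  set q : Fin n → ℝ := (Set.Ici K).indicator u
  have hqK : q K ≠ 0 := by simpa [q] using hpos.ne'
  have hqL : q L ≠ 0 := by simpa [q, hKL.le] using hposL.ne'
  have hq : q ∉ axisVertices := by
    rintro (hzero | ⟨j, -, hj⟩)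
    · exact hqK (congrFun hzero K)
    · have hsupport {i : Fin n} (hi : q i ≠ 0) : i = j := by
        by_contra hij
        exact hi (hj ▸ Pi.single_eq_of_ne hij _)
      exact hKL.ne ((hsupport hqK).trans (hsupport hqL).symm)
  have hcard : (insert q axisVertices).ncard = n + 1 := by
    rw [Set.ncard_insert_of_notMem hq, ncard_insert_zero_image_single hposL.ne'
      (Set.toFinite _), Set.ncard_compl, Set.ncard_singleton, Nat.card_fin,
      Nat.sub_add_cancel Z.pos]
  have hsub : insert q axisVertices ⊆
      {x ∈ PF n u | x Z = 0} ∩ (PF n u).extremePoints ℝ := by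
    have hmem {x : Fin n → ℝ} (hx : x ∈ (PF n u).extremePoints ℝ) (hxZ : x Z = 0) :
        x ∈ {x ∈ PF n u | x Z = 0} ∩ (PF n u).extremePoints ℝ := ⟨⟨hx.1, hxZ⟩, hx⟩
    rintro _ (rfl | rfl | ⟨j, hj, rfl⟩)
    · exact hmem (indicator_mem_extremePoints hu hnonneg (isUpperSet_Ici K)) (by simp [q, hZK])
    · exact hmem (zero_mem_extremePoints hu hnonneg) rfl
    · exact hmem (single_mem_extremePoints hu hnonneg hL j) (Pi.single_eq_of_ne (Ne.symm hj) _)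
  have hfacet := hsimp _ (isFacetOf_coord_eq_zero hu hnonneg hL hposL Z)
  have hfinite := Nat.finite_of_card_ne_zero (hfacet.trans_ne Z.pos.ne')
  have hle := Set.ncard_le_ncard hsub hfinite
  rw [hcard, ← Nat.card_coe_set_eq, hfacet] at hle
  exact Nat.not_succ_le_self n hle

end PF

/-- For `n ≥ 3`, the parking function polytope `PF(u)` is simplicial
(every facet contains exactly `n` extreme points) iff `m(u) = (n-1,1)`,
i.e. `u = (0,…,0,d)` for some `d > 0`; and in that case `PF(u)` is the
simplex `conv(0, d·e₁, …, d·eₙ)`. -/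
theorem parking_polytope_simplicial_iff
    (n : ℕ) (hn : 3 ≤ n) (u : Fin n → ℝ)
    (hmono : Monotone u) (hnonneg : ∀ i, 0 ≤ u i) (hne : u ≠ 0) :
    ((∀ F : Set (Fin n → ℝ), IsFacetOf n (PF n u) F →
        Nat.card ↥(F ∩ Set.extremePoints ℝ (PF n u)) = n) ↔
      (∃ d : ℝ, 0 < d ∧ (∀ i : Fin n, (i : ℕ) < n - 1 → u i = 0) ∧
        u ⟨n - 1, by omega⟩ = d)) ∧
    (∀ d : ℝ, 0 < d → (∀ i : Fin n, (i : ℕ) < n - 1 → u i = 0) →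
      u ⟨n - 1, by omega⟩ = d →
      PF n u = convexHull ℝ
        (insert (0 : Fin n → ℝ) {x | ∃ i : Fin n, x = d • Pi.single i (1 : ℝ)})) := by
  have hL : IsTop (⟨n - 1, by omega⟩ : Fin n) := fun i => Nat.le_sub_one_of_lt i.2
  have hlt {i : Fin n} (hi : i ≠ ⟨n - 1, by omega⟩) : (i : ℕ) < n - 1 := (hL i).lt_of_ne hi
  have hsimplex (d : ℝ) (hzero : ∀ i : Fin n, (i : ℕ) < n - 1 → u i = 0)
      (hd : u ⟨n - 1, by omega⟩ = d) : PF n u = convexHull ℝ (cornerVertices n d) :=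
    hd ▸ PF.eq_convexHull_cornerVertices hmono hnonneg hL fun i hi => hzero i (hlt hi)
  refine ⟨⟨fun hsimp => ?_, ?_⟩, fun d _ => hsimplex d⟩
  · obtain ⟨i, hi⟩ := Function.ne_iff.1 hne
    refine ⟨_, ((hnonneg i).lt_of_ne' hi).trans_le (hmono (hL i)), fun i hi => ?_, rfl⟩
    by_contra hui
    have hpos : 0 < u ⟨n - 2, by omega⟩ :=
      ((hnonneg i).lt_of_ne' hui).trans_le (hmono (Nat.le_sub_one_of_lt hi))
    exact PF.not_isSimplicial hmono hnonneg (Z := ⟨0, by omega⟩) (Fin.mk_lt_mk.2 (by omega))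
      (Fin.mk_lt_mk.2 (by omega)) hL hpos hsimp
  · rintro ⟨d, hd, hzero, hud⟩
    rw [hsimplex d hzero hud]
    exact isSimplicial_convexHull_cornerVertices (by omega) hd.ne'
end
end
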